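/- Fix d ≥ 1. Let N, L ≥ 1 be integers satisfying 1343 L² ≤ N², and let P(ω) = Σ_{m=0}^{L−1} G_{N+m}(ω), where each G_{N+m} is the restriction to the unit sphere S^{2d−1} ⊂ ℂ^d of a homogeneous holomorphic polynomial of degree N+m on ℂ^d. Then ‖P‖_{L²(S^{2d−1})}² ≤ 32 ‖ρ ∘ P‖_{L²(S^{2d−1})}², where the L² norms are with respect to the normalized surface measure on S^{2d−1}. -/

import Mathlib

open MeasureTheory

/-- The defect function `ρ(w) = ||1+w| − 1|`. -/
noncomputable def ρ (w : ℂ) : ℝ := |‖1 + w‖ - 1|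

/-- The Euclidean (ℓ²) norm on `ℂ^d`: `‖z‖ = √(Σ_q |z_q|²)`. -/
noncomputable def l2norm {d : ℕ} (z : Fin d → ℂ) : ℝ :=
  Real.sqrt (∑ q, ‖z q‖ ^ 2)

/-- The standard Gaussian probability measure on `ℂ^d`,
`dγ_d(z) = (1/π^d) e^{−‖z‖²} dm(z)`. -/
noncomputable def gaussianCd (d : ℕ) : Measure (Fin d → ℂ) :=
  volume.withDensity fun z =>
    ENNReal.ofReal ((1 / Real.pi ^ d) * Real.exp (-∑ q, ‖z q‖ ^ 2))

/-- The rotation-invariant probability measure `σ_d` on the unit sphere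
`S^{2d−1} = {ω ∈ ℂ^d : ‖ω‖ = 1}`, realized as the pushforward of the Gaussian
measure on `ℂ^d` under the radial normalization `z ↦ z/‖z‖`. -/
noncomputable def sphereMeasure (d : ℕ) : Measure (Fin d → ℂ) :=
  (gaussianCd d).map fun z => (l2norm z)⁻¹ • z

/-!
Let `P` be a finite sum of functions `f i` of distinct weights `n i` under a measure-preserving
action of the circle, all weights being close to `N`. Rotating by the angle `k * π / (2 * N)`
multiplies `f i` by nearly `I ^ k`, so by orthogonality of the weights it turns `P` into nearly
`I ^ k * P` in `L²`; hence `ρ ∘ P` and `ρ ∘ (I ^ k * P)` have nearly the same norm. On the other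
hand `ρ w` can only be small compared to `‖w‖` if `w` is close to the circle `‖1 + w‖ = 1`, and
the four points `I ^ k * w` cannot all be: `∑ k < 4, ρ (I ^ k * w) ^ 2 ≥ (4 / 3) * ‖w‖ ^ 2`.
-/

open scoped InnerProductSpace

section Defect

theorem lipschitzWith_rho : LipschitzWith 1 ρ := by
  refine LipschitzWith.of_le_add fun u v => ?_
  calc ρ u ≤ |‖1 + v‖ - 1| + |‖1 + u‖ - ‖1 + v‖| := by
        rw [ρ, ← sub_add_sub_cancel ‖1 + u‖ ‖1 + v‖ 1, add_comm]; exact abs_add_le _ _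
    _ ≤ ρ v + dist u v := by
        rw [dist_eq_norm, ← add_sub_add_left_eq_sub u v 1]
        exact add_le_add_right (abs_norm_sub_norm_le _ _) _

theorem rho_zero : ρ 0 = 0 := by simp [ρ]

theorem rho_nonneg (w : ℂ) : 0 ≤ ρ w := abs_nonneg _

theorem rho_sq_le (u v : ℂ) : ρ u ^ 2 ≤ 2 * (ρ v ^ 2 + ‖u - v‖ ^ 2) := by
  have h : ρ u ≤ ρ v + ‖u - v‖ := by
    simpa [dist_eq_norm] using lipschitzWith_rho.le_add_mul u v
  exact (pow_le_pow_left₀ (rho_nonneg u) h 2).trans add_sq_le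

theorem two_mul_re_add_norm_sq (w : ℂ) :
    2 * w.re + ‖w‖ ^ 2 = (‖1 + w‖ + 1) * (‖1 + w‖ - 1) := by
  have h : ‖1 + w‖ ^ 2 = 1 + 2 * w.re + ‖w‖ ^ 2 := by
    simp only [Complex.sq_norm, Complex.normSq_add, map_one, one_mul, Complex.conj_re]
    ring
  linear_combination -h

theorem sq_two_mul_re_add_norm_sq_le (w : ℂ) :
    (2 * w.re + ‖w‖ ^ 2) ^ 2 ≤ (2 + ‖w‖) ^ 2 * ρ w ^ 2 := by
  have h : ‖1 + w‖ + 1 ≤ 2 + ‖w‖ := by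
    linarith [(norm_add_le 1 w).trans_eq (by rw [norm_one])]
  rw [two_mul_re_add_norm_sq, mul_pow, ρ, sq_abs]
  gcongr

theorem sum_sq_two_mul_re_I_pow_mul_add (w : ℂ) (a : ℝ) :
    ∑ k ∈ Finset.range 4, (2 * (Complex.I ^ k * w).re + a) ^ 2 = 8 * ‖w‖ ^ 2 + 4 * a ^ 2 := by
  rw [Complex.sq_norm, Complex.normSq_apply]
  simp only [Finset.sum_range_succ, Finset.sum_range_zero, pow_succ, pow_zero, Complex.mul_re,
    Complex.mul_im, Complex.one_re, Complex.one_im, Complex.I_re, Complex.I_im]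
  ring

theorem norm_sq_le_sum_rho_sq (w : ℂ) :
    4 / 3 * ‖w‖ ^ 2 ≤ ∑ k ∈ Finset.range 4, ρ (Complex.I ^ k * w) ^ 2 := by
  refine le_of_mul_le_mul_left ?_ (by positivity : 0 < (2 + ‖w‖) ^ 2)
  calc (2 + ‖w‖) ^ 2 * (4 / 3 * ‖w‖ ^ 2)
      ≤ 8 * ‖w‖ ^ 2 + 4 * (‖w‖ ^ 2) ^ 2 := by
        linarith [mul_nonneg (sq_nonneg ‖w‖) (sq_nonneg (1 - ‖w‖))]
    _ = ∑ k ∈ Finset.range 4, (2 * (Complex.I ^ k * w).re + ‖w‖ ^ 2) ^ 2 :=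
        (sum_sq_two_mul_re_I_pow_mul_add w _).symm
    _ ≤ ∑ k ∈ Finset.range 4, (2 + ‖w‖) ^ 2 * ρ (Complex.I ^ k * w) ^ 2 :=
        Finset.sum_le_sum fun k _ => by
          simpa using sq_two_mul_re_add_norm_sq_le (Complex.I ^ k * w)
    _ = (2 + ‖w‖) ^ 2 * ∑ k ∈ Finset.range 4, ρ (Complex.I ^ k * w) ^ 2 :=
        (Finset.mul_sum _ _ _).symm

variable {Ω : Type*} [MeasurableSpace Ω] {μ : Measure Ω} {F G : Ω → ℂ}

theorem integrable_rho_sq (hF : MemLp F 2 μ) : Integrable (fun ω => ρ (F ω) ^ 2) μ :=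
  (lipschitzWith_rho.comp_memLp rho_zero hF).integrable_sq

theorem integral_rho_sq_le (hF : MemLp F 2 μ) (hG : MemLp G 2 μ) :
    ∫ ω, ρ (F ω) ^ 2 ∂μ ≤ 2 * (∫ ω, ρ (G ω) ^ 2 ∂μ + ∫ ω, ‖F ω - G ω‖ ^ 2 ∂μ) := by
  have hGi := integrable_rho_sq hG
  have hFG : Integrable (fun ω => ‖F ω - G ω‖ ^ 2) μ :=
    (hF.sub hG).integrable_norm_pow two_ne_zero
  rw [← integral_add hGi hFG, ← integral_const_mul]
  exact integral_mono (integrable_rho_sq hF) ((hGi.add hFG).const_mul 2) fun ω => rho_sq_le _ _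

theorem integral_norm_sq_le_sum_integral_rho_sq (hF : MemLp F 2 μ) :
    4 / 3 * ∫ ω, ‖F ω‖ ^ 2 ∂μ
      ≤ ∑ k ∈ Finset.range 4, ∫ ω, ρ (Complex.I ^ k * F ω) ^ 2 ∂μ := by
  have hint (k : ℕ) (_ : k ∈ Finset.range 4) :
      Integrable (fun ω => ρ (Complex.I ^ k * F ω) ^ 2) μ :=
    integrable_rho_sq (hF.const_mul _)
  rw [← integral_const_mul, ← integral_finsetSum _ hint]
  exact integral_mono ((hF.integrable_norm_pow two_ne_zero).const_mul _)
    (integrable_finsetSum _ hint) fun ω => norm_sq_le_sum_rho_sq _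

end Defect

section Pythagoras

variable {Ω ι 𝕜 E : Type*} [MeasurableSpace Ω] {μ : Measure Ω} [RCLike 𝕜]
  [NormedAddCommGroup E] [InnerProductSpace 𝕜 E]

theorem integrable_inner_of_memLp_two {f g : Ω → E} (hf : MemLp f 2 μ) (hg : MemLp g 2 μ) :
    Integrable (fun ω => ⟪f ω, g ω⟫_𝕜) μ :=
  (hf.norm.integrable_mul hg.norm).mono' (hf.1.inner hg.1)
    (.of_forall fun _ => norm_inner_le_norm _ _)

theorem integral_norm_sq_sum_of_pairwise_orthogonal {s : Finset ι} {f : ι → Ω → E}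
    (hf : ∀ i ∈ s, MemLp (f i) 2 μ)
    (horth : ∀ i ∈ s, ∀ j ∈ s, i ≠ j → ∫ ω, ⟪f i ω, f j ω⟫_𝕜 ∂μ = 0) :
    ∫ ω, ‖∑ i ∈ s, f i ω‖ ^ 2 ∂μ = ∑ i ∈ s, ∫ ω, ‖f i ω‖ ^ 2 ∂μ := by
  have hint (i) (hi : i ∈ s) (j) (hj : j ∈ s) : Integrable (fun ω => ⟪f j ω, f i ω⟫_𝕜) μ :=
    integrable_inner_of_memLp_two (hf j hj) (hf i hi)
  have hnorm (g : Ω → E) :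
      ((∫ ω, ‖g ω‖ ^ 2 ∂μ : ℝ) : 𝕜) = ∫ ω, ⟪g ω, g ω⟫_𝕜 ∂μ := by
    simp only [← integral_ofReal, inner_self_eq_norm_sq_to_K, RCLike.ofReal_pow]
  apply RCLike.ofReal_injective (K := 𝕜)
  calc ((∫ ω, ‖∑ i ∈ s, f i ω‖ ^ 2 ∂μ : ℝ) : 𝕜)
      = ∫ ω, ∑ i ∈ s, ∑ j ∈ s, ⟪f j ω, f i ω⟫_𝕜 ∂μ := by
        simp only [hnorm, sum_inner, inner_sum]
    _ = ∑ i ∈ s, ∑ j ∈ s, ∫ ω, ⟪f j ω, f i ω⟫_𝕜 ∂μ := by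
        rw [integral_finsetSum _ fun i hi => integrable_finsetSum _ (hint i hi)]
        exact Finset.sum_congr rfl fun i hi => integral_finsetSum _ (hint i hi)
    _ = ∑ i ∈ s, ∫ ω, ⟪f i ω, f i ω⟫_𝕜 ∂μ :=
        Finset.sum_congr rfl fun i hi => Finset.sum_eq_single_of_mem i hi
          fun j hj hji => horth j hj i hi hji
    _ = ((∑ i ∈ s, ∫ ω, ‖f i ω‖ ^ 2 ∂μ : ℝ) : 𝕜) := by
        simp only [RCLike.ofReal_sum, hnorm]

end Pythagoras

section CircleWeight

variable {Ω : Type*} [MulAction Circle Ω]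

/-- `f` is a weight vector of weight `n` for the circle action on functions `Ω → E`: rotating the
argument by `c` multiplies the value by `c ^ n`. A homogeneous polynomial of degree `n` on `ℂ^d`
is the motivating example. -/
def IsCircleWeight {E : Type*} [SMul Circle E] (n : ℤ) (f : Ω → E) : Prop :=
  ∀ (c : Circle) (ω : Ω), f (c • ω) = c ^ n • f ω

namespace IsCircleWeight

theorem const_smul {E : Type*} [AddCommGroup E] [Module ℂ E] {n : ℤ} {f : Ω → E}
    (hf : IsCircleWeight n f) (b : ℂ) : IsCircleWeight n fun ω => b • f ω := fun c ω => by
  simp only [hf c, smul_comm b]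

theorem inner {E : Type*} [NormedAddCommGroup E] [InnerProductSpace ℂ E] {m n : ℤ} {f g : Ω → E}
    (hf : IsCircleWeight m f) (hg : IsCircleWeight n g) :
    IsCircleWeight (n - m) fun ω => ⟪f ω, g ω⟫_ℂ := fun c ω => by
  simp only [hf c, hg c, Circle.smul_def, inner_smul_left, inner_smul_right,
    ← Circle.coe_inv_eq_conj, smul_eq_mul, ← mul_assoc, ← Circle.coe_mul, zpow_sub]

variable [MeasurableSpace Ω] [MeasurableConstSMul Circle Ω] {μ : Measure Ω}
  [SMulInvariantMeasure Circle Ω μ]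

theorem integral_eq_zero {E : Type*} [NormedAddCommGroup E] [NormedSpace ℂ E] {n : ℤ}
    {f : Ω → E} (hf : IsCircleWeight n f) (hn : n ≠ 0) : ∫ ω, f ω ∂μ = 0 := by
  obtain ⟨c, hc⟩ : ∃ c : Circle, c ^ n ≠ 1 := by
    refine ⟨Circle.exp (Real.pi / n), ?_⟩
    rw [← Circle.exp_intCast_mul, mul_div_cancel₀ _ (Int.cast_ne_zero.mpr hn)]
    exact Circle.exp_pi_ne_one
  have h : ((c ^ n : Circle) : ℂ) • ∫ ω, f ω ∂μ = (1 : ℂ) • ∫ ω, f ω ∂μ := by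
    rw [← integral_smul, one_smul, ← integral_smul_eq_self f (g := c)]
    simp only [hf c, Circle.smul_def]
  by_contra h0
  exact hc (Circle.ext (smul_left_injective ℂ h0 h))

variable {E : Type*} [NormedAddCommGroup E] [InnerProductSpace ℂ E]
  {ι : Type*} {s : Finset ι} {n : ι → ℤ} {f : ι → Ω → E}

theorem integral_norm_sq_sum (hn : Set.InjOn n s) (hf : ∀ i ∈ s, IsCircleWeight (n i) (f i))
    (hL2 : ∀ i ∈ s, MemLp (f i) 2 μ) :
    ∫ ω, ‖∑ i ∈ s, f i ω‖ ^ 2 ∂μ = ∑ i ∈ s, ∫ ω, ‖f i ω‖ ^ 2 ∂μ :=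
  integral_norm_sq_sum_of_pairwise_orthogonal (𝕜 := ℂ) hL2 fun i hi j hj hij =>
    ((hf i hi).inner (hf j hj)).integral_eq_zero (sub_ne_zero.mpr (hn.ne hj hi hij.symm))

theorem integral_norm_sq_sum_smul_le (hn : Set.InjOn n s)
    (hf : ∀ i ∈ s, IsCircleWeight (n i) (f i)) (hL2 : ∀ i ∈ s, MemLp (f i) 2 μ)
    {b : ι → ℂ} {B : ℝ} (hb : ∀ i ∈ s, ‖b i‖ ≤ B) :
    ∫ ω, ‖∑ i ∈ s, b i • f i ω‖ ^ 2 ∂μ ≤ B ^ 2 * ∫ ω, ‖∑ i ∈ s, f i ω‖ ^ 2 ∂μ := by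
  rw [integral_norm_sq_sum hn hf hL2, integral_norm_sq_sum hn
    (fun i hi => (hf i hi).const_smul (b i)) (fun i hi => (hL2 i hi).const_smul (b i)),
    Finset.mul_sum]
  refine Finset.sum_le_sum fun i hi => ?_
  simp only [norm_smul, mul_pow, integral_const_mul]
  have := hb i hi
  gcongr

end IsCircleWeight

theorem norm_circleExp_zpow_sub_circleExp_le (t x : ℝ) (n : ℤ) :
    ‖((Circle.exp t ^ n : Circle) : ℂ) - Circle.exp (t * x)‖ ≤ |t| * |n - x| := by
  have h : ((Circle.exp t ^ n : Circle) : ℂ) - Circle.exp (t * x)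
      = Circle.exp (t * x) * (Complex.exp (Complex.I * ↑(t * (n - x))) - 1) := by
    rw [← Circle.exp_intCast_mul, mul_sub, mul_one, mul_comm Complex.I, ← Circle.coe_exp,
      ← Circle.coe_mul, ← Circle.exp_add]
    ring_nf
  rw [h, norm_mul, Circle.norm_coe, one_mul, ← abs_mul]
  exact Real.norm_exp_I_mul_ofReal_sub_one_le

theorem circleExp_nat_mul_pi_div_two (k : ℕ) :
    ((Circle.exp (k * (Real.pi / 2)) : Circle) : ℂ) = Complex.I ^ k := by
  rw [Circle.exp_natCast_mul, Circle.coe_pow, Circle.coe_exp, Complex.ofReal_div,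
    Complex.ofReal_ofNat, Complex.exp_pi_div_two_mul_I]

variable [MeasurableSpace Ω] [MeasurableConstSMul Circle Ω] {μ : Measure Ω}
  [SMulInvariantMeasure Circle Ω μ] {ι : Type*} {s : Finset ι} {n : ι → ℤ}

theorem integral_norm_sq_sub_rotate_le {E : Type*} [NormedAddCommGroup E]
    [InnerProductSpace ℂ E] {f : ι → Ω → E} (hn : Set.InjOn n s)
    (hf : ∀ i ∈ s, IsCircleWeight (n i) (f i)) (hL2 : ∀ i ∈ s, MemLp (f i) 2 μ) {N r : ℝ}
    (hr : ∀ i ∈ s, |n i - N| ≤ r) (t : ℝ) :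
    ∫ ω, ‖(Circle.exp (t * N) : ℂ) • ∑ i ∈ s, f i ω - ∑ i ∈ s, f i (Circle.exp t • ω)‖ ^ 2 ∂μ
      ≤ (|t| * r) ^ 2 * ∫ ω, ‖∑ i ∈ s, f i ω‖ ^ 2 ∂μ := by
  have hrot (ω : Ω) :
      (Circle.exp (t * N) : ℂ) • ∑ i ∈ s, f i ω - ∑ i ∈ s, f i (Circle.exp t • ω)
        = ∑ i ∈ s, ((Circle.exp (t * N) : ℂ) - (Circle.exp t ^ n i : Circle)) • f i ω := by
    rw [Finset.smul_sum, ← Finset.sum_sub_distrib]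
    exact Finset.sum_congr rfl fun i hi => by rw [hf i hi, Circle.smul_def, ← sub_smul]
  simp only [hrot]
  refine IsCircleWeight.integral_norm_sq_sum_smul_le hn hf hL2 fun i hi => ?_
  rw [norm_sub_rev]
  exact (norm_circleExp_zpow_sub_circleExp_le t N (n i)).trans
    (mul_le_mul_of_nonneg_left (hr i hi) (abs_nonneg t))

variable {f : ι → Ω → ℂ}

theorem integral_rho_sq_I_pow_mul_le (hn : Set.InjOn n s)
    (hf : ∀ i ∈ s, IsCircleWeight (n i) (f i)) (hL2 : ∀ i ∈ s, MemLp (f i) 2 μ) {N δ : ℝ}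
    (hN : N ≠ 0) (hδ : ∀ i ∈ s, |n i - N| ≤ δ * |N|) (k : ℕ) :
    ∫ ω, ρ (Complex.I ^ k * ∑ i ∈ s, f i ω) ^ 2 ∂μ
      ≤ 2 * (∫ ω, ρ (∑ i ∈ s, f i ω) ^ 2 ∂μ
        + (k * (Real.pi / 2) * δ) ^ 2 * ∫ ω, ‖∑ i ∈ s, f i ω‖ ^ 2 ∂μ) := by
  have hP : MemLp (fun ω => ∑ i ∈ s, f i ω) 2 μ := memLp_finsetSum s hL2
  set t : ℝ := k * (Real.pi / 2) / N with ht
  have hrot : MemLp (fun ω => ∑ i ∈ s, f i (Circle.exp t • ω)) 2 μ :=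
    hP.comp_measurePreserving (measurePreserving_smul (Circle.exp t) μ)
  have hinv : ∫ ω, ρ (∑ i ∈ s, f i (Circle.exp t • ω)) ^ 2 ∂μ = ∫ ω, ρ (∑ i ∈ s, f i ω) ^ 2 ∂μ :=
    integral_smul_eq_self (fun ω => ρ (∑ i ∈ s, f i ω) ^ 2)
  have hdiff := integral_norm_sq_sub_rotate_le hn hf hL2 hδ t
  have htN : |t| * (δ * |N|) = k * (Real.pi / 2) * δ := by
    have : |t| * |N| = k * (Real.pi / 2) := by
      rw [← abs_mul, ht, div_mul_cancel₀ _ hN, abs_of_nonneg (by positivity)]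
    linear_combination δ * this
  rw [htN, ht, div_mul_cancel₀ _ hN, circleExp_nat_mul_pi_div_two, ← ht] at hdiff
  refine (integral_rho_sq_le (hP.const_mul _) hrot).trans ?_
  rw [hinv]
  gcongr
  exact hdiff

theorem mul_integral_norm_sq_le_integral_rho_sq (hn : Set.InjOn n s)
    (hf : ∀ i ∈ s, IsCircleWeight (n i) (f i)) (hL2 : ∀ i ∈ s, MemLp (f i) 2 μ) {N δ : ℝ}
    (hN : N ≠ 0) (hδ : ∀ i ∈ s, |n i - N| ≤ δ * |N|) :
    (4 / 3 - 7 * Real.pi ^ 2 * δ ^ 2) * ∫ ω, ‖∑ i ∈ s, f i ω‖ ^ 2 ∂μ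
      ≤ 8 * ∫ ω, ρ (∑ i ∈ s, f i ω) ^ 2 ∂μ := by
  have h := (integral_norm_sq_le_sum_integral_rho_sq (memLp_finsetSum s hL2)).trans
    (Finset.sum_le_sum fun k _ => integral_rho_sq_I_pow_mul_le hn hf hL2 hN hδ k)
  simp only [Finset.sum_range_succ, Finset.sum_range_zero, Nat.cast_zero, Nat.cast_one,
    Nat.cast_ofNat] at h
  linarith

end CircleWeight

theorem stmt17_general {Ω ι : Type*} [MulAction Circle Ω] [MeasurableSpace Ω]
    [MeasurableConstSMul Circle Ω] {μ : Measure Ω} [SMulInvariantMeasure Circle Ω μ]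
    {s : Finset ι} {n : ι → ℤ} {f : ι → Ω → ℂ} (hn : Set.InjOn n s)
    (hf : ∀ i ∈ s, IsCircleWeight (n i) (f i)) (hL2 : ∀ i ∈ s, MemLp (f i) 2 μ)
    {N : ℝ} (hN : N ≠ 0) (hclose : ∀ i ∈ s, |n i - N| ≤ 1 / 8 * |N|) :
    ∫ ω, ‖∑ i ∈ s, f i ω‖ ^ 2 ∂μ ≤ 32 * ∫ ω, ρ (∑ i ∈ s, f i ω) ^ 2 ∂μ := by
  have h := mul_integral_norm_sq_le_integral_rho_sq hn hf hL2 hN hclose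
  have hconst : 1 / 4 ≤ 4 / 3 - 7 * Real.pi ^ 2 * (1 / 8) ^ 2 := by
    nlinarith [Real.pi_lt_d4, Real.pi_pos]
  have hP : 0 ≤ ∫ ω, ‖∑ i ∈ s, f i ω‖ ^ 2 ∂μ := integral_nonneg fun ω => by positivity
  linarith [mul_le_mul_of_nonneg_right hconst hP]

section Invariance

theorem smulInvariantMeasure_withDensity {G α : Type*} [Group G] [MulAction G α]
    [MeasurableSpace α] [MeasurableConstSMul G α] (μ : Measure α) [SMulInvariantMeasure G α μ]
    {f : α → ENNReal} (hf : ∀ (g : G) (x : α), f (g • x) = f x) :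
    SMulInvariantMeasure G α (μ.withDensity f) where
  measure_preimage_smul c s hs := by
    rw [withDensity_apply _ (measurable_const_smul c hs), withDensity_apply _ hs,
      ← (measurePreserving_smul c μ).setLIntegral_comp_preimage_emb
        (measurableEmbedding_const_smul c) f s]
    simp only [hf]

instance smulInvariantMeasure_circle_volume : SMulInvariantMeasure Circle ℂ volume where
  measure_preimage_smul c _ hs :=
    (rotation c).measurePreserving.measure_preimage hs.nullMeasurableSet

instance smulInvariantMeasure_circle_volume_pi {ι : Type*} [Fintype ι] :
    SMulInvariantMeasure Circle (ι → ℂ) volume where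
  measure_preimage_smul c _ hs :=
    (volume_preserving_pi fun _ => measurePreserving_smul c volume).measure_preimage
      hs.nullMeasurableSet

end Invariance

section Sphere

variable {d : ℕ}

theorem l2norm_smul (a : ℂ) (z : Fin d → ℂ) : l2norm (a • z) = ‖a‖ * l2norm z := by
  simp only [l2norm, Pi.smul_apply, norm_smul, mul_pow, ← Finset.mul_sum]
  rw [Real.sqrt_mul (sq_nonneg _), Real.sqrt_sq (norm_nonneg _)]

theorem measurable_l2norm : Measurable (l2norm : (Fin d → ℂ) → ℝ) := by
  unfold l2norm
  fun_prop

theorem norm_le_l2norm (z : Fin d → ℂ) : ‖z‖ ≤ l2norm z :=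
  (pi_norm_le_iff_of_nonneg (Real.sqrt_nonneg _)).mpr fun q => Real.le_sqrt_of_sq_le <|
    Finset.single_le_sum (f := fun q => ‖z q‖ ^ 2) (fun _ _ => by positivity) (Finset.mem_univ q)

theorem norm_inv_l2norm_smul_le_one (z : Fin d → ℂ) : ‖(l2norm z)⁻¹ • z‖ ≤ 1 := by
  have h0 : 0 ≤ l2norm z := Real.sqrt_nonneg _
  rw [norm_smul, norm_inv, Real.norm_of_nonneg h0]
  exact inv_mul_le_one_of_le₀ (norm_le_l2norm z) h0

theorem measurable_inv_l2norm_smul : Measurable fun z : Fin d → ℂ => (l2norm z)⁻¹ • z :=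
  measurable_l2norm.inv.smul measurable_id

theorem integrable_exp_neg_norm_sq : Integrable fun z : ℂ => Real.exp (-‖z‖ ^ 2) := by
  refine (GaussianFourier.integrable_cexp_neg_mul_sq_norm_add (V := ℂ) (b := 1) (by simp) 0
    0).norm.congr (.of_forall fun z => ?_)
  simp [Complex.norm_exp, ← Complex.ofReal_pow]

instance isFiniteMeasure_gaussianCd : IsFiniteMeasure (gaussianCd d) := by
  have h : Integrable fun z : Fin d → ℂ => Real.exp (-∑ q, ‖z q‖ ^ 2) := by
    simpa only [← Real.exp_sum, Finset.sum_neg_distrib, volume_pi] using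
      Integrable.fintype_prod fun _ : Fin d => integrable_exp_neg_norm_sq
  exact isFiniteMeasure_withDensity_ofReal (h.const_mul _).2

instance isFiniteMeasure_sphereMeasure : IsFiniteMeasure (sphereMeasure d) := by
  unfold sphereMeasure
  infer_instance

instance smulInvariantMeasure_circle_gaussianCd :
    SMulInvariantMeasure Circle (Fin d → ℂ) (gaussianCd d) :=
  smulInvariantMeasure_withDensity volume fun c z => by
    simp only [Circle.smul_def, Pi.smul_apply, norm_smul, Circle.norm_coe, one_mul]

instance smulInvariantMeasure_circle_sphereMeasure :
    SMulInvariantMeasure Circle (Fin d → ℂ) (sphereMeasure d) :=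
  smulInvariantMeasure_map (gaussianCd d) _
    (fun c z => by
      rw [Circle.smul_def, l2norm_smul, Circle.norm_coe, one_mul, Circle.smul_def, smul_comm])
    measurable_inv_l2norm_smul

theorem memLp_sphereMeasure {E : Type*} [NormedAddCommGroup E] {f : (Fin d → ℂ) → E}
    (hf : Continuous f) (p : ENNReal) : MemLp f p (sphereMeasure d) := by
  obtain ⟨C, hC⟩ := (isCompact_closedBall (0 : Fin d → ℂ) 1).exists_bound_of_continuousOn
    hf.continuousOn
  refine MemLp.of_bound hf.aestronglyMeasurable C ?_
  rw [sphereMeasure, ae_map_iff measurable_inv_l2norm_smul.aemeasurable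
    (measurableSet_le hf.norm.measurable measurable_const)]
  exact .of_forall fun z => hC _ (mem_closedBall_zero_iff.mpr (norm_inv_l2norm_smul_le_one z))

end Sphere

section Polynomial

theorem eval_smul_of_isHomogeneous {σ R : Type*} [CommSemiring R] {n : ℕ}
    {p : MvPolynomial σ R} (hp : p.IsHomogeneous n) (c : R) (z : σ → R) :
    MvPolynomial.eval (c • z) p = c ^ n * MvPolynomial.eval z p := by
  rw [MvPolynomial.eval_eq, MvPolynomial.eval_eq, Finset.mul_sum]
  refine Finset.sum_congr rfl fun m hm => ?_
  have hdeg : ∑ i ∈ m.support, m i = n := by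
    rw [← Finsupp.degree_apply, Finsupp.degree_eq_weight_one]
    exact hp (MvPolynomial.mem_support_iff.mp hm)
  simp only [Pi.smul_apply, smul_eq_mul, mul_pow, Finset.prod_mul_distrib,
    Finset.prod_pow_eq_pow_sum, hdeg]
  ring

theorem isCircleWeight_eval {σ : Type*} {n : ℕ} {p : MvPolynomial σ ℂ}
    (hp : p.IsHomogeneous n) : IsCircleWeight n fun z : σ → ℂ => MvPolynomial.eval z p :=
  fun c z => by
    simp only [Circle.smul_def, eval_smul_of_isHomogeneous hp, smul_eq_mul, zpow_natCast,
      Circle.coe_pow]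

end Polynomial

theorem abs_natCast_add_sub_self_le {N m : ℕ} (h : 8 * m ≤ N) :
    |(((N + m : ℕ) : ℤ) : ℝ) - N| ≤ 1 / 8 * |(N : ℝ)| := by
  have h' : 8 * (m : ℝ) ≤ N := by exact_mod_cast h
  push_cast
  rw [add_sub_cancel_left, Nat.abs_cast, Nat.abs_cast]
  linarith

/-- **Lifted high-frequency estimate.** Let `N, L ≥ 1` satisfy `1343 L² ≤ N²`, and let
`P = Σ_{m=0}^{L−1} G_{N+m}` where each `G_{N+m}` is (the restriction to `S^{2d−1}` of) a
homogeneous holomorphic polynomial of degree `N+m` on `ℂ^d`. Then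
`‖P‖²_{L²(S^{2d−1})} ≤ 32 ‖ρ ∘ P‖²_{L²(S^{2d−1})}`. -/
theorem stmt17 (d : ℕ) (hd : 1 ≤ d) (N L : ℕ) (hN : 1 ≤ N) (hL : 1 ≤ L)
    (hNL : 1343 * L ^ 2 ≤ N ^ 2)
    (G : ℕ → MvPolynomial (Fin d) ℂ)
    (hG : ∀ m ∈ Finset.range L, (G (N + m)).IsHomogeneous (N + m)) :
    (∫ ω, ‖∑ m ∈ Finset.range L, MvPolynomial.eval ω (G (N + m))‖ ^ 2 ∂(sphereMeasure d))
      ≤ 32 * ∫ ω, (ρ (∑ m ∈ Finset.range L, MvPolynomial.eval ω (G (N + m)))) ^ 2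
          ∂(sphereMeasure d) := by
  have hLN : 8 * L ≤ N := by nlinarith
  refine stmt17_general (Nat.cast_injective.comp (add_right_injective N)).injOn
    (fun m hm => isCircleWeight_eval (hG m hm))
    (fun m _ => memLp_sphereMeasure (MvPolynomial.continuous_eval _) 2)
    (Nat.cast_ne_zero.mpr (Nat.one_le_iff_ne_zero.mp hN))
    fun m hm => abs_natCast_add_sub_self_le ?_
  exact (Nat.mul_le_mul_left 8 (Finset.mem_range_le hm)).trans hLN
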